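/- Let V ∈ 𝒫^{s,p}_q(ℝⁿ), g ∈ W^{s,p}(ℝⁿ), K ∈ 𝒦_p, and let x₀ ∈ Ω and r > 0 satisfy B_{2r}(x₀) ⊂ Ω. If u ∈ Y^{s,p}_g(Ω)^− is a weak subsolution of L^p_K u + V|u|^{p−2}u = 0 in Ω with exterior data g, then for every M ∈ (0,∞) and every nonnegative ζ ∈ C_c^∞(B_r(x₀)), setting w = (u−M)_+ and c_p = (1/2)·(2(p−1))^{p−1}: ∫_{B_r(x₀)} (w(y)ζ(y))^p·V(y) dy + ∬_{B_r(x₀)×B_r(x₀)} |ζ(x)w(x) − ζ(y)w(y)|^p·K(x−y) dx dy ≤ 2^{2p+1}·(1/4 + c_p)·∬_{B_r(x₀)×B_r(x₀)} (max{w(x),w(y)})^p·|ζ(x)−ζ(y)|^p·K(x−y) dx dy + 2^{p+2}·( sup_{x ∈ supp ζ} ∫_{ℝⁿ∖B_r(x₀)} w(y)^{p−1}·K(x−y) dy )·‖w·ζ^p‖_{L¹(B_r(x₀))}. -/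

import Mathlib

open MeasureTheory Real Set Metric Filter ENNReal

noncomputable section

abbrev Rn (n : ℕ) : Type := EuclideanSpace ℝ (Fin n)

namespace NLS

/-- The normalization constant `c_{n,p,s}`. -/
def cnps (n : ℕ) (p s : ℝ) : ℝ :=
  Real.Gamma (((n : ℝ) + p) / 2) * p * (1 - s) /
    (Real.pi ^ (((n : ℝ) - 1) / 2) * Real.Gamma ((p + 1) / 2))

/-- Membership in the kernel class `𝒦_p`. -/
def KernelClass (n : ℕ) (p s lam Lam : ℝ) (K : Rn n → ℝ) : Prop :=
  Measurable K ∧ (∀ y, K (-y) = K y) ∧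
    ∀ y : Rn n, y ≠ 0 →
      cnps n p s * lam * ‖y‖ ^ (-(n : ℝ) - p * s) ≤ K y ∧
        K y ≤ cnps n p s * Lam * ‖y‖ ^ (-(n : ℝ) - p * s)

/-- `H_p(t) = |t|^{p-2} t`. -/
def Hp (p t : ℝ) : ℝ := |t| ^ (p - 2) * t

/-- Positive part of a function. -/
def plusPart {n : ℕ} (f : Rn n → ℝ) : Rn n → ℝ := fun x => max (f x) 0

/-- Negative part of a function. -/
def minusPart {n : ℕ} (f : Rn n → ℝ) : Rn n → ℝ := fun x => max (-f x) 0

/-- The Gagliardo integrand `|u(x)-u(y)|^p |x-y|^{-n-ps}`. -/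
def gagliardoIntegrand (n : ℕ) (p s : ℝ) (u : Rn n → ℝ) (z : Rn n × Rn n) : ℝ :=
  |u z.1 - u z.2| ^ p * ‖z.1 - z.2‖ ^ (-(n : ℝ) - p * s)

/-- The Gagliardo seminorm `[u]_{W^{s,p}(U)}`. -/
def gagliardoSemi (n : ℕ) (p s : ℝ) (U : Set (Rn n)) (u : Rn n → ℝ) : ℝ :=
  (∫ z in U ×ˢ U, gagliardoIntegrand n p s u z) ^ (1 / p)

/-- The `L^p(U)` norm. -/
def lpNormOn (n : ℕ) (p : ℝ) (U : Set (Rn n)) (u : Rn n → ℝ) : ℝ :=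
  (∫ x in U, |u x| ^ p) ^ (1 / p)

/-- The `W^{s,p}(U)` norm. -/
def wspNorm (n : ℕ) (p s : ℝ) (U : Set (Rn n)) (u : Rn n → ℝ) : ℝ :=
  lpNormOn n p U u + gagliardoSemi n p s U u

/-- Membership in the fractional Sobolev space `W^{s,p}(U)`. -/
def MemWsp (n : ℕ) (p s : ℝ) (U : Set (Rn n)) (u : Rn n → ℝ) : Prop :=
  Measurable u ∧ IntegrableOn (fun x => |u x| ^ p) U ∧
    IntegrableOn (gagliardoIntegrand n p s u) (U ×ˢ U)

/-- `ℝ^{2n}_Ω = ℝ^{2n} ∖ (Ωᶜ × Ωᶜ)`. -/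
def R2n (n : ℕ) (Ω : Set (Rn n)) : Set (Rn n × Rn n) := {z | z.1 ∈ Ω ∨ z.2 ∈ Ω}

/-- Membership in `X^{s,p}(Ω)`. -/
def MemX (n : ℕ) (p s : ℝ) (Ω : Set (Rn n)) (u : Rn n → ℝ) : Prop :=
  Measurable u ∧ IntegrableOn (fun x => |u x| ^ p) Ω ∧
    IntegrableOn (gagliardoIntegrand n p s u) (R2n n Ω)

/-- Membership in `X^{s,p}_0(Ω)`. -/
def MemX0 (n : ℕ) (p s : ℝ) (Ω : Set (Rn n)) (u : Rn n → ℝ) : Prop :=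
  MemX n p s Ω u ∧ ∀ᵐ x ∂(volume : Measure (Rn n)), x ∉ Ω → u x = 0

/-- The norm `‖u‖_{X^{s,p}_0(Ω)}`. -/
def normX0 (n : ℕ) (p s : ℝ) (Ω : Set (Rn n)) (u : Rn n → ℝ) : ℝ :=
  (∫ z in R2n n Ω, gagliardoIntegrand n p s u z) ^ (1 / p)

/-- Open axis-parallel cube with center `c` and half side-length `h`. -/
def cube (n : ℕ) (c : Fin n → ℝ) (h : ℝ) : Set (Rn n) := {y | ∀ i, |y i - c i| < h}

/-- The `(A_1,A_1)` characteristic `[υ,ω]_{(A_1,A_1)}`. -/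
def A1const (n : ℕ) (υ ω : Rn n → ℝ) : ℝ≥0∞ :=
  ⨆ (c : Fin n → ℝ) (h : ℝ) (_ : 0 < h),
    ENNReal.ofReal (⨍ y in cube n c h, υ y) *
      essSup (fun y => (ENNReal.ofReal (ω y))⁻¹) (volume.restrict (cube n c h))

/-- `(υ,ω)` belongs to the `(A_1,A_1)`-Muckenhoupt class. -/
def A1pair (n : ℕ) (υ ω : Rn n → ℝ) : Prop := A1const n υ ω < ⊤

/-- `ω` belongs to the `A_1`-Muckenhoupt class. -/
def A1 (n : ℕ) (ω : Rn n → ℝ) : Prop := A1pair n ω ω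

/-- Membership in the potential class `𝒫^{s,p}_q(ℝⁿ)`. -/
structure IsPotential (n : ℕ) (p s q : ℝ) (V : Rn n → ℝ) : Prop where
  measurable : Measurable V
  minusPart_locInt : LocallyIntegrable (minusPart V) volume
  plusPart_locLq : LocallyIntegrable (fun x => plusPart V x ^ q) volume
  exists_b : ∃ b : Rn n → ℝ, Measurable b ∧ (∀ᵐ x ∂(volume : Measure (Rn n)), 0 < b x) ∧
    (∃ M : ℝ, ∀ x, |b x| ≤ M) ∧
    LocallyIntegrable (fun x => (plusPart V x / b x) ^ q) volume ∧
    ∀ i : ℕ, 0 < i →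
      A1pair n (minusPart V) (fun x => max (b x) (1 / (i : ℝ)) / b x * plusPart V x) ∧
      A1 n (fun x => max (b x) (1 / (i : ℝ)) / b x * plusPart V x)

/-- Membership in the weighted class `L^p_V(Ω)`. -/
def MemLpV (n : ℕ) (p : ℝ) (Ω : Set (Rn n)) (V u : Rn n → ℝ) : Prop :=
  IntegrableOn (fun x => |u x| ^ p * plusPart V x) Ω ∧
    IntegrableOn (fun x => |u x| ^ p * minusPart V x) Ω

/-- Membership in `Y^{s,p}(Ω)`. -/
def MemY (n : ℕ) (p s : ℝ) (Ω : Set (Rn n)) (V u : Rn n → ℝ) : Prop :=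
  MemX n p s Ω u ∧ MemLpV n p Ω V u

/-- Membership in `Y^{s,p}_0(Ω)`. -/
def MemY0 (n : ℕ) (p s : ℝ) (Ω : Set (Rn n)) (V u : Rn n → ℝ) : Prop :=
  MemX0 n p s Ω u ∧ MemLpV n p Ω V u

/-- Membership in `Y^{s,p}_g(Ω)^+`. -/
def MemYgPlus (n : ℕ) (p s : ℝ) (Ω : Set (Rn n)) (V g u : Rn n → ℝ) : Prop :=
  MemY n p s Ω V u ∧ MemY0 n p s Ω V (fun x => max (g x - u x) 0)

/-- Membership in `Y^{s,p}_g(Ω)^-`. -/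
def MemYgMinus (n : ℕ) (p s : ℝ) (Ω : Set (Rn n)) (V g u : Rn n → ℝ) : Prop :=
  MemY n p s Ω V u ∧ MemY0 n p s Ω V (fun x => max (u x - g x) 0)

/-- Membership in `Y^{s,p}_g(Ω)`. -/
def MemYg (n : ℕ) (p s : ℝ) (Ω : Set (Rn n)) (V g u : Rn n → ℝ) : Prop :=
  MemYgPlus n p s Ω V g u ∧ MemYgMinus n p s Ω V g u

/-- The pairing `⟨u,φ⟩_{H_p,K}`. -/
def pairing (n : ℕ) (p : ℝ) (K u φ : Rn n → ℝ) : ℝ :=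
  ∫ z : Rn n × Rn n, Hp p (u z.1 - u z.2) * (φ z.1 - φ z.2) * K (z.1 - z.2)

/-- `u` is a weak subsolution of `L^p_K u + V|u|^{p-2}u = 0` in `Ω` with exterior data `g`. -/
def WeakSubsolution (n : ℕ) (p s : ℝ) (Ω : Set (Rn n)) (K V g u : Rn n → ℝ) : Prop :=
  MemYgMinus n p s Ω V g u ∧
    ∀ φ : Rn n → ℝ, MemY0 n p s Ω V φ → (∀ x, 0 ≤ φ x) →
      pairing n p K u φ + ∫ x : Rn n, V x * (|u x| ^ (p - 2) * u x) * φ x ≤ 0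

/-- `u` is a weak supersolution of `L^p_K u + V|u|^{p-2}u = 0` in `Ω` with exterior data `g`. -/
def WeakSupersolution (n : ℕ) (p s : ℝ) (Ω : Set (Rn n)) (K V g u : Rn n → ℝ) : Prop :=
  MemYgPlus n p s Ω V g u ∧
    ∀ φ : Rn n → ℝ, MemY0 n p s Ω V φ → (∀ x, 0 ≤ φ x) →
      0 ≤ pairing n p K u φ + ∫ x : Rn n, V x * (|u x| ^ (p - 2) * u x) * φ x

/-- `u` is a weak solution of `L^p_K u + V|u|^{p-2}u = 0` in `Ω` with exterior data `g`. -/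
def WeakSolution (n : ℕ) (p s : ℝ) (Ω : Set (Rn n)) (K V g u : Rn n → ℝ) : Prop :=
  MemYg n p s Ω V g u ∧
    ∀ φ : Rn n → ℝ, MemY0 n p s Ω V φ →
      pairing n p K u φ + ∫ x : Rn n, V x * (|u x| ^ (p - 2) * u x) * φ x = 0

/-- The surface measure `|S^{n-1}|` of the unit sphere of `ℝⁿ`. -/
def sphereArea (n : ℕ) : ℝ := n * (volume (Metric.ball (0 : Rn n) 1)).toReal

/-- The nonlocal tail `𝒯_r(u;x₀)`. -/
def tail (n : ℕ) (p s : ℝ) (u : Rn n → ℝ) (x₀ : Rn n) (r : ℝ) : ℝ :=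
  (p * s / sphereArea n * r ^ (p * s) *
      ∫ y in (Metric.ball x₀ r)ᶜ, |u y| ^ (p - 1) * ‖y - x₀‖ ^ (-(n : ℝ) - p * s)) ^ (1 / (p - 1))

def supOn {n : ℕ} (u : Rn n → ℝ) (B : Set (Rn n)) : ℝ := sSup (u '' B)
def infOn {n : ℕ} (u : Rn n → ℝ) (B : Set (Rn n)) : ℝ := sInf (u '' B)
def oscOn {n : ℕ} (u : Rn n → ℝ) (B : Set (Rn n)) : ℝ := supOn u B - infOn u B

/-- The `L^q(Ω)` norm, used for `‖V₊‖_{L^q(Ω)}`. -/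
def lqNormOn (n : ℕ) (q : ℝ) (Ω : Set (Rn n)) (f : Rn n → ℝ) : ℝ :=
  (∫ x in Ω, |f x| ^ q) ^ (1 / q)

/-- The Hölder seminorm `[u]_{C^ε(B)}`. -/
def holderSemi {n : ℕ} (ε : ℝ) (B : Set (Rn n)) (u : Rn n → ℝ) : ℝ :=
  sSup ((fun z : Rn n × Rn n => |u z.1 - u z.2| / ‖z.1 - z.2‖ ^ ε) ''
    ((B ×ˢ B) ∩ {z | z.1 ≠ z.2}))

/-- The sup norm `‖u‖_{C(B)}`. -/
def cNorm {n : ℕ} (B : Set (Rn n)) (u : Rn n → ℝ) : ℝ := sSup ((fun x => |u x|) '' B)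

/-- The Hölder norm `‖u‖_{C^ε(B)}`. -/
def holderNorm {n : ℕ} (ε : ℝ) (B : Set (Rn n)) (u : Rn n → ℝ) : ℝ :=
  cNorm B u + holderSemi ε B u

/-- `u` is locally `ε`-Hölder continuous in `Ω`. -/
def LocallyHolder {n : ℕ} (ε : ℝ) (Ω : Set (Rn n)) (u : Rn n → ℝ) : Prop :=
  ∀ (x₀ : Rn n) (r : ℝ), closure (Metric.ball x₀ r) ⊆ Ω →
    ∃ L : ℝ, ∀ x ∈ Metric.ball x₀ r, ∀ y ∈ Metric.ball x₀ r, |u x - u y| ≤ L * ‖x - y‖ ^ ε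

end NLS

open NLS

theorem aux_young {p A Y : ℝ} (hp : 1 < p) (hA : 0 ≤ A) (hY : 0 ≤ Y) :
    p * A ^ (p - 1) * Y ≤ 1 / 2 * A ^ p + (2 * (p - 1)) ^ (p - 1) * Y ^ p := by
  have hp0 : 0 < p := by linarith
  have hp1 : 0 < p - 1 := by linarith
  set t : ℝ := (p / (2 * (p - 1))) ^ ((p - 1) / p) with ht
  have hbase : 0 < p / (2 * (p - 1)) := by positivity
  have htpos : 0 < t := Real.rpow_pos_of_pos hbase _
  have h := Real.young_inequality_of_nonneg (a := p * Y / t) (b := A ^ (p - 1) * t)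
    (by positivity) (by positivity) (Real.HolderConjugate.conjExponent hp)
  have e1 : p * Y / t * (A ^ (p - 1) * t) = p * A ^ (p - 1) * Y := by
    field_simp
  have tp : t ^ p = (p / (2 * (p - 1))) ^ (p - 1) := by
    rw [ht, ← Real.rpow_mul hbase.le]; congr 1; field_simp
  have tq : t ^ (p / (p - 1)) = p / (2 * (p - 1)) := by
    rw [ht, ← Real.rpow_mul hbase.le]
    have : (p - 1) / p * (p / (p - 1)) = 1 := by field_simp
    rw [this, Real.rpow_one]
  have e2 : (p * Y / t) ^ p / p = (2 * (p - 1)) ^ (p - 1) * Y ^ p := by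
    rw [Real.div_rpow (by positivity) htpos.le, tp, Real.mul_rpow hp0.le hY,
      Real.div_rpow hp0.le (by positivity)]
    have : p ^ p = p ^ (p - 1) * p := by
      rw [← Real.rpow_add_one hp0.ne']; congr 1; ring
    rw [this]
    have h1 : 0 < p ^ (p - 1) := by positivity
    have h2 : 0 < (2 * (p - 1)) ^ (p - 1) := by positivity
    field_simp
  have e3 : (A ^ (p - 1) * t) ^ p.conjExponent / p.conjExponent = 1 / 2 * A ^ p := by
    rw [Real.conjExponent, Real.mul_rpow (by positivity) htpos.le, tq, ← Real.rpow_mul hA]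
    have : (p - 1) * (p / (p - 1)) = p := by field_simp
    rw [this]
    field_simp
  rw [e1, e2, e3] at h
  linarith

theorem aux_mvt {p a b : ℝ} (hp : 1 < p) (hb : 0 ≤ b) (hba : b ≤ a) :
    a ^ p - b ^ p ≤ p * a ^ (p - 1) * (a - b) := by
  rcases eq_or_lt_of_le (hb.trans hba) with h0 | h0
  · have : b = 0 := le_antisymm (by linarith) hb
    subst h0; subst this; simp
  have h := one_add_mul_self_le_rpow_one_add (s := b / a - 1) (p := p)
    (by have : 0 ≤ b / a := by positivity
        linarith) hp.le
  have e : (1 + (b / a - 1)) = b / a := by ring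
  rw [e, Real.div_rpow hb h0.le, le_div_iff₀ (by positivity)] at h
  have e2 : a ^ p = a ^ (p - 1) * a := by
    rw [← Real.rpow_add_one h0.ne']; congr 1; ring
  have e3 : (1 + p * (b / a - 1)) * a ^ p = a ^ p + p * a ^ (p - 1) * (b - a) := by
    rw [e2]; field_simp
  rw [e3] at h
  linarith

theorem aux_conv {p a b : ℝ} (hp : 1 ≤ p) (ha : 0 ≤ a) (hb : 0 ≤ b) :
    (a + b) ^ p ≤ 2 ^ (p - 1) * (a ^ p + b ^ p) := by
  have := NNReal.rpow_add_le_mul_rpow_add_rpow ⟨a, ha⟩ ⟨b, hb⟩ hp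
  exact_mod_cast this

theorem aux_pt0 {p a b z t : ℝ} (hp : 1 < p) (hb : 0 ≤ b) (hba : b ≤ a) (hz : 0 ≤ z)
    (ht : 0 ≤ t) :
    2 ^ (-p) * |z * a - t * b| ^ p - (1 / 2 + (2 * (p - 1)) ^ (p - 1)) * (a ^ p * |z - t| ^ p)
      ≤ (a - b) ^ (p - 1) * (a * z ^ p - b * t ^ p) := by
  have hp0 : 0 < p := by linarith
  have hp1 : 0 < p - 1 := by linarith
  have ha : 0 ≤ a := hb.trans hba
  have hab : 0 ≤ a - b := by linarith
  set m := max z t with hm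
  have hm0 : 0 ≤ m := le_max_of_le_left hz
  have hD : (a - b) ^ p = (a - b) ^ (p - 1) * (a - b) := by
    rcases eq_or_lt_of_le hab with h | h
    · rw [← h]; simp [hp0.ne']
    · rw [← Real.rpow_add_one h.ne']; congr 1; ring
  -- first step
  have s1 : 1 / 2 * ((a - b) * m) ^ p - (2 * (p - 1)) ^ (p - 1) * (a * |z - t|) ^ p
      ≤ (a - b) ^ (p - 1) * (a * z ^ p - b * t ^ p) := by
    have hq : 0 ≤ (2 * (p - 1)) ^ (p - 1) * (a * |z - t|) ^ p := by positivity
    have hr : 0 ≤ ((a - b) * m) ^ p := by positivity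
    have hd1 : 0 ≤ (a - b) ^ (p - 1) := by positivity
    rcases le_total t z with h | h
    · have hmz : m = z := max_eq_left h
      have htz : t ^ p ≤ z ^ p := Real.rpow_le_rpow ht h hp0.le
      have : ((a - b) * m) ^ p ≤ (a - b) ^ (p - 1) * (a * z ^ p - b * t ^ p) := by
        rw [Real.mul_rpow hab hm0, hD, hmz, mul_assoc]
        apply mul_le_mul_of_nonneg_left _ hd1
        nlinarith
      linarith
    · have hmz : m = t := max_eq_right h
      have hy := aux_young hp (A := (a - b) * t) (Y := a * |z - t|) (by positivity) (by positivity)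
      have hmv := aux_mvt hp hz h
      have habs : |z - t| = t - z := by rw [abs_of_nonpos (by linarith)]; ring
      have e1 : ((a - b) * t) ^ p = (a - b) ^ (p - 1) * ((a - b) * t ^ p) := by
        rw [Real.mul_rpow hab ht, hD]; ring
      have e2 : ((a - b) * t) ^ (p - 1) = (a - b) ^ (p - 1) * t ^ (p - 1) :=
        Real.mul_rpow hab ht
      have h3 : (a - b) ^ (p - 1) * a * (t ^ p - z ^ p) ≤
          (a - b) ^ (p - 1) * a * (p * t ^ (p - 1) * (t - z)) :=
        mul_le_mul_of_nonneg_left hmv (by positivity)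
      rw [hmz]
      rw [e2, e1] at hy
      rw [e1]
      rw [habs] at hy ⊢
      nlinarith
  have s2 : |z * a - t * b| ^ p ≤ 2 ^ (p - 1) * (((a - b) * m) ^ p + (a * |z - t|) ^ p) := by
    refine le_trans (Real.rpow_le_rpow (abs_nonneg _) ?_ hp0.le)
      (aux_conv hp.le (a := (a - b) * m) (b := a * |z - t|) (by positivity) (by positivity))
    have e : z * a - t * b = (a - b) * t + a * (z - t) := by ring
    rw [e]
    refine (abs_add_le _ _).trans ?_
    rw [abs_mul, abs_mul, abs_of_nonneg hab, abs_of_nonneg ht, abs_of_nonneg ha]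
    have : t ≤ m := le_max_right _ _
    gcongr
  have e : (2 : ℝ) ^ (-p) * 2 ^ (p - 1) = 1 / 2 := by
    rw [← Real.rpow_add (by norm_num)]
    have : -p + (p - 1) = -1 := by ring
    rw [this, Real.rpow_neg_one]; norm_num
  have s3 : 2 ^ (-p) * |z * a - t * b| ^ p ≤ 1 / 2 * (((a - b) * m) ^ p + (a * |z - t|) ^ p) := by
    rw [← e, mul_assoc]
    gcongr
  rw [← Real.mul_rpow ha (abs_nonneg _)]
  linarith

theorem Hp_of_nonneg {p t : ℝ} (hp : 1 < p) (ht : 0 ≤ t) : Hp p t = t ^ (p - 1) := by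
  unfold Hp
  rcases eq_or_lt_of_le ht with h | h
  · rw [← h, mul_zero, Real.zero_rpow (by linarith)]
  · rw [abs_of_pos h, ← Real.rpow_add_one h.ne']; congr 1; ring

theorem Hp_neg (p t : ℝ) : Hp p (-t) = - Hp p t := by
  unfold Hp; rw [abs_neg]; ring

theorem abs_Hp {p t : ℝ} (hp : 1 < p) : |Hp p t| = |t| ^ (p - 1) := by
  rw [← Hp_of_nonneg hp (abs_nonneg t)]
  unfold Hp
  rw [abs_mul, abs_abs, abs_of_nonneg (Real.rpow_nonneg (abs_nonneg t) _)]

theorem aux_pt1 {p a b M z t : ℝ} (hp : 1 < p) (hz : 0 ≤ z) (ht : 0 ≤ t) (hab : b ≤ a) :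
    2 ^ (-p) * |z * max (a - M) 0 - t * max (b - M) 0| ^ p
      - (1 / 2 + (2 * (p - 1)) ^ (p - 1)) *
        ((max (max (a - M) 0) (max (b - M) 0)) ^ p * |z - t| ^ p)
      ≤ Hp p (a - b) * (max (a - M) 0 * z ^ p - max (b - M) 0 * t ^ p) := by
  have hw : max (b - M) 0 ≤ max (a - M) 0 := max_le_max (by linarith) le_rfl
  have hb0 : 0 ≤ max (b - M) 0 := le_max_right _ _
  rw [max_eq_left hw]
  refine (aux_pt0 hp hb0 hw hz ht).trans ?_
  rw [Hp_of_nonneg hp (by linarith)]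
  have hz' : 0 ≤ z ^ p := by positivity
  rcases le_total M b with h | h
  · rw [max_eq_left (by linarith), max_eq_left (by linarith)]
    apply le_of_eq; congr 2; ring
  · rw [max_eq_right (a := b - M) (by linarith)]
    have h0 : 0 ≤ max (a - M) 0 := le_max_right _ _
    simp only [sub_zero, zero_mul]
    gcongr
    exact max_le (by linarith) (by linarith)

theorem aux_pt {p a b M z t : ℝ} (hp : 1 < p) (hz : 0 ≤ z) (ht : 0 ≤ t) :
    2 ^ (-p) * |z * max (a - M) 0 - t * max (b - M) 0| ^ p
      - (1 / 2 + (2 * (p - 1)) ^ (p - 1)) *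
        ((max (max (a - M) 0) (max (b - M) 0)) ^ p * |z - t| ^ p)
      ≤ Hp p (a - b) * (max (a - M) 0 * z ^ p - max (b - M) 0 * t ^ p) := by
  rcases le_total b a with h | h
  · exact aux_pt1 hp hz ht h
  · have := aux_pt1 (M := M) hp ht hz h
    rw [abs_sub_comm, max_comm (max (b - M) 0), abs_sub_comm t z] at this
    refine this.trans (le_of_eq ?_)
    rw [← neg_sub a b, Hp_neg]; ring

theorem aux_tailpt {p a b M : ℝ} (hp : 1 < p) :
    -(max (b - M) 0 ^ (p - 1) * max (a - M) 0) ≤ Hp p (a - b) * max (a - M) 0 := by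
  have h0 : 0 ≤ max (a - M) 0 := le_max_right _ _
  have hb0 : 0 ≤ max (b - M) 0 := le_max_right _ _
  rw [← neg_mul]
  rcases le_total a M with h | h
  · rw [max_eq_right (a := a - M) (by linarith)]; simp
  apply mul_le_mul_of_nonneg_right _ h0
  rcases le_total b a with h' | h'
  · rw [Hp_of_nonneg hp (by linarith)]
    have h1 : 0 ≤ (a - b) ^ (p - 1) := Real.rpow_nonneg (by linarith) _
    have h2 : 0 ≤ max (b - M) 0 ^ (p - 1) := Real.rpow_nonneg hb0 _
    linarith
  · rw [← neg_sub b a, Hp_neg, Hp_of_nonneg hp (by linarith)]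
    apply neg_le_neg
    apply Real.rpow_le_rpow (by linarith) _ (by linarith)
    exact le_max_of_le_left (by linarith)

def kk (n : ℕ) (p s : ℝ) (z : Rn n) : ℝ := ‖z‖ ^ (-(n : ℝ) - p * s)

def GG (n : ℕ) (p s : ℝ) (z : Rn n) : ℝ := min 1 ‖z‖ ^ p * kk n p s z

theorem kk_nonneg (n : ℕ) (p s : ℝ) (z : Rn n) : 0 ≤ kk n p s z :=
  Real.rpow_nonneg (norm_nonneg _) _

theorem GG_nonneg (n : ℕ) (p s : ℝ) (z : Rn n) : 0 ≤ GG n p s z :=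
  mul_nonneg (Real.rpow_nonneg (le_min zero_le_one (norm_nonneg _)) _) (kk_nonneg _ _ _ _)

theorem kk_meas (n : ℕ) (p s : ℝ) : Measurable (kk n p s) := by
  unfold kk; fun_prop

theorem kk_comm (n : ℕ) (p s : ℝ) (x y : Rn n) : kk n p s (x - y) = kk n p s (y - x) := by
  unfold kk; rw [norm_sub_rev]

theorem GG_comm (n : ℕ) (p s : ℝ) (x y : Rn n) : GG n p s (x - y) = GG n p s (y - x) := by
  unfold GG; rw [norm_sub_rev, kk_comm]

theorem GG_int (n : ℕ) (hn : 1 ≤ n) (p s : ℝ) (hp : 1 < p) (hs0 : 0 < s) (hs1 : s < 1) :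
    Integrable (GG n p s) := by
  have : Nonempty (Fin n) := ⟨⟨0, hn⟩⟩
  have hps : 0 < p * s := by positivity
  have hps' : p * s < p := by nlinarith
  have key := (integrable_fun_norm_addHaar (E := Rn n) (volume : Measure (Rn n))
    (f := fun t : ℝ => min 1 t ^ p * t ^ (-(n : ℝ) - p * s))).2
  apply key
  have hfr : Module.finrank ℝ (Rn n) = n := by simp
  rw [hfr]
  have hcast : ((n - 1 : ℕ) : ℝ) = (n : ℝ) - 1 := by push_cast [hn]; ring
  rw [← Set.Ioc_union_Ioi_eq_Ioi (zero_le_one (α := ℝ))]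
  apply IntegrableOn.union
  · have h := (intervalIntegrable_iff_integrableOn_Ioc_of_le (zero_le_one (α := ℝ))).1
      (intervalIntegral.intervalIntegrable_rpow' (a := 0) (b := 1) (r := p - p * s - 1)
        (by linarith))
    refine h.congr_fun ?_ measurableSet_Ioc
    intro t ht
    have ht0 : 0 < t := ht.1
    simp only [smul_eq_mul]
    rw [min_eq_right ht.2, ← Real.rpow_natCast, hcast, ← Real.rpow_add ht0, ← Real.rpow_add ht0]
    congr 1; ring
  · have h := integrableOn_Ioi_rpow_of_lt (a := -1 - p * s) (c := 1) (by linarith) one_pos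
    refine h.congr_fun ?_ measurableSet_Ioi
    intro t ht
    have ht1 : 1 < t := ht
    have ht0 : 0 < t := by linarith
    simp only [smul_eq_mul]
    rw [min_eq_left ht1.le, Real.one_rpow, one_mul, ← Real.rpow_natCast, hcast,
      ← Real.rpow_add ht0]
    congr 1; ring

theorem conv2 {n : ℕ} {Ω : Set (Rn n)} (hΩ : MeasurableSet Ω) {F G : Rn n → ℝ}
    (hF : IntegrableOn F Ω) (hG : Integrable G) :
    Integrable (fun z : Rn n × Rn n => Ω.indicator F z.2 * G (z.1 - z.2)) := by
  have hF' := (integrable_indicator_iff hΩ).2 hF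
  exact hF'.convolution_integrand (ContinuousLinearMap.mul ℝ ℝ) hG

theorem conv1 {n : ℕ} {p s : ℝ} {Ω : Set (Rn n)} (hΩ : MeasurableSet Ω) {F : Rn n → ℝ}
    (hF : IntegrableOn F Ω) (hG : Integrable (GG n p s)) :
    Integrable (fun z : Rn n × Rn n => Ω.indicator F z.1 * GG n p s (z.1 - z.2)) := by
  have h := (conv2 hΩ hF hG).swap
  refine h.congr (Eventually.of_forall fun z => ?_)
  simp only [Function.comp, Prod.fst_swap, Prod.snd_swap]
  rw [GG_comm]

theorem gag_eq (n : ℕ) (p s : ℝ) (u : Rn n → ℝ) (z : Rn n × Rn n) :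
    gagliardoIntegrand n p s u z = |u z.1 - u z.2| ^ p * kk n p s (z.1 - z.2) := rfl

theorem gag_meas {n : ℕ} (p s : ℝ) {u : Rn n → ℝ} (hu : Measurable u) :
    Measurable (gagliardoIntegrand n p s u) := by
  unfold gagliardoIntegrand; fun_prop

theorem R2n_meas {n : ℕ} {Ω : Set (Rn n)} (hΩ : MeasurableSet Ω) : MeasurableSet (R2n n Ω) :=
  (measurable_fst hΩ).union (measurable_snd hΩ)

theorem eta_kk {n : ℕ} {p s C : ℝ} (hp : 1 < p) (hC : 0 ≤ C) {η : Rn n → ℝ}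
    (hL : ∀ x y, |η x - η y| ≤ C * min 1 ‖x - y‖) (x y : Rn n) :
    |η x - η y| ^ p * kk n p s (x - y) ≤ C ^ p * GG n p s (x - y) := by
  unfold GG
  rw [← mul_assoc, ← Real.mul_rpow hC (le_min zero_le_one (norm_nonneg _))]
  apply mul_le_mul_of_nonneg_right _ (kk_nonneg _ _ _ _)
  exact Real.rpow_le_rpow (abs_nonneg _) (hL x y) (by linarith)

theorem prod_split {p C a b e f : ℝ} (hp : 1 < p) (hC : 0 ≤ C) (hf : |f| ≤ C) :
    |a * e - b * f| ^ p ≤ 2 ^ (p - 1) * (C ^ p * |a - b| ^ p + |a| ^ p * |e - f| ^ p) := by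
  rw [← Real.mul_rpow hC (abs_nonneg _), ← Real.mul_rpow (abs_nonneg _) (abs_nonneg _)]
  refine le_trans (Real.rpow_le_rpow (abs_nonneg _) ?_ (by linarith))
    (aux_conv hp.le (by positivity) (by positivity))
  have e1 : a * e - b * f = f * (a - b) + a * (e - f) := by ring
  rw [e1]
  refine (abs_add_le _ _).trans ?_
  rw [abs_mul, abs_mul]
  gcongr

theorem gag_prod {n : ℕ} {p s : ℝ} (hp : 1 < p)
    (hG : Integrable (GG n p s)) {Ω : Set (Rn n)} (hΩ : MeasurableSet Ω) {f η : Rn n → ℝ}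
    (hfm : Measurable f) (hηm : Measurable η) (hf : IntegrableOn (fun x => |f x| ^ p) Ω)
    (hgf : IntegrableOn (gagliardoIntegrand n p s f) (R2n n Ω)) {C : ℝ} (hC : 0 ≤ C)
    (hηC : ∀ x, |η x| ≤ C) (hL : ∀ x y, |η x - η y| ≤ C * min 1 ‖x - y‖) :
    IntegrableOn (gagliardoIntegrand n p s (fun x => f x * η x)) (R2n n Ω) := by
  have hi1 := (conv1 (p := p) (s := s) hΩ hf hG).integrableOn (s := R2n n Ω)
  have hi2 := (conv2 hΩ hf hG).integrableOn (s := R2n n Ω)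
  have hdom := ((hgf.add hi1).add hi2).const_mul (2 ^ (p - 1) * C ^ p)
  refine Integrable.mono' hdom (gag_meas p s (hfm.mul hηm)).aestronglyMeasurable ?_
  refine ae_restrict_of_forall_mem (R2n_meas hΩ) ?_
  rintro ⟨x, y⟩ hz
  simp only [Pi.add_apply, gag_eq]
  have hk := kk_nonneg n p s (x - y)
  have hGn := GG_nonneg n p s (x - y)
  have hCp : 0 ≤ C ^ p := by positivity
  have h2 : (0 : ℝ) ≤ 2 ^ (p - 1) := by positivity
  have hek := eta_kk (s := s) hp hC hL x y
  have hn1 : 0 ≤ Ω.indicator (fun x => |f x| ^ p) x := Set.indicator_nonneg (fun _ _ => by positivity) _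
  have hn2 : 0 ≤ Ω.indicator (fun x => |f x| ^ p) y := Set.indicator_nonneg (fun _ _ => by positivity) _
  rw [Real.norm_of_nonneg (by positivity)]
  rw [mul_assoc]
  rcases hz with hx | hy
  · have h1 := prod_split (a := f x) (b := f y) (e := η x) (f := η y) hp hC (hηC y)
    refine (mul_le_mul_of_nonneg_right h1 hk).trans ?_
    rw [mul_assoc]
    refine mul_le_mul_of_nonneg_left ?_ h2
    rw [Set.indicator_of_mem (show x ∈ Ω from hx)]
    have := mul_le_mul_of_nonneg_left hek (show 0 ≤ |f x| ^ p by positivity)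
    have h3 : 0 ≤ C ^ p * (Ω.indicator (fun x => |f x| ^ p) y * GG n p s (x - y)) := by positivity
    nlinarith
  · have h1 := prod_split (a := f y) (b := f x) (e := η y) (f := η x) hp hC (hηC x)
    rw [abs_sub_comm, abs_sub_comm (f y), abs_sub_comm (η y)] at h1
    refine (mul_le_mul_of_nonneg_right h1 hk).trans ?_
    rw [mul_assoc]
    refine mul_le_mul_of_nonneg_left ?_ h2
    rw [Set.indicator_of_mem (show y ∈ Ω from hy)]
    have := mul_le_mul_of_nonneg_left hek (show 0 ≤ |f y| ^ p by positivity)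
    have h3 : 0 ≤ C ^ p * (Ω.indicator (fun x => |f x| ^ p) x * GG n p s (x - y)) := by positivity
    nlinarith

theorem maxw_int {n : ℕ} {p s : ℝ} (hp : 1 < p)
    (hG : Integrable (GG n p s)) {Ω B : Set (Rn n)} (hΩ : MeasurableSet Ω) (hBm : MeasurableSet B)
    (hB : B ⊆ Ω) {f η : Rn n → ℝ}
    (hfm : Measurable f) (hf0 : ∀ x, 0 ≤ f x)
    (hηm : Measurable η) (hf : IntegrableOn (fun x => |f x| ^ p) Ω)
    {C : ℝ} (hC : 0 ≤ C) (hL : ∀ x y, |η x - η y| ≤ C * min 1 ‖x - y‖) :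
    IntegrableOn (fun z : Rn n × Rn n => max (f z.1) (f z.2) ^ p * |η z.1 - η z.2| ^ p *
      kk n p s (z.1 - z.2)) (B ×ˢ B) := by
  have hi1 := (conv1 (p := p) (s := s) hΩ hf hG).integrableOn (s := B ×ˢ B)
  have hi2 := (conv2 hΩ hf hG).integrableOn (s := B ×ˢ B)
  have hdom := (hi1.add hi2).const_mul (C ^ p)
  refine Integrable.mono' hdom ?_ ?_
  · have := kk_meas n p s
    exact Measurable.aestronglyMeasurable (by fun_prop)
  refine ae_restrict_of_forall_mem (hBm.prod hBm) ?_
  rintro ⟨x, y⟩ ⟨hx, hy⟩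
  simp only [Pi.add_apply]
  have hk := kk_nonneg n p s (x - y)
  have hGn := GG_nonneg n p s (x - y)
  have hCp : 0 ≤ C ^ p := by positivity
  have hek := eta_kk (s := s) hp hC hL x y
  have hm0 : 0 ≤ max (f x) (f y) := le_max_of_le_left (hf0 x)
  rw [Real.norm_of_nonneg (by positivity), Set.indicator_of_mem (hB hx),
    Set.indicator_of_mem (hB hy), abs_of_nonneg (hf0 x), abs_of_nonneg (hf0 y)]
  have hfx : 0 ≤ f x ^ p := Real.rpow_nonneg (hf0 x) _
  have hfy : 0 ≤ f y ^ p := Real.rpow_nonneg (hf0 y) _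
  have hmax : max (f x) (f y) ^ p ≤ f x ^ p + f y ^ p := by
    rcases le_total (f x) (f y) with h | h
    · rw [max_eq_right h]; linarith
    · rw [max_eq_left h]; linarith
  rw [mul_assoc]
  calc _ ≤ (f x ^ p + f y ^ p) * (C ^ p * GG n p s (x - y)) := by gcongr
    _ = _ := by ring

theorem lip_min {n : ℕ} {C L : ℝ} {η : Rn n → ℝ} (h0 : ∀ x, 0 ≤ η x) (hC : ∀ x, η x ≤ C)
    (hL : ∀ x y, |η x - η y| ≤ L * ‖x - y‖) (hL0 : 0 ≤ L) (hC0 : 0 ≤ C) (x y : Rn n) :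
    |η x - η y| ≤ (C + L) * min 1 ‖x - y‖ := by
  rcases le_total 1 ‖x - y‖ with h | h
  · rw [min_eq_left h, abs_le]
    constructor <;> linarith [h0 x, h0 y, hC x, hC y]
  · rw [min_eq_right h]
    refine (hL x y).trans ?_
    have := norm_nonneg (x - y)
    gcongr; linarith

theorem lip_pow {p C L a b : ℝ} (hp : 1 < p) (ha : 0 ≤ a) (hb : 0 ≤ b) (haC : a ≤ C) (hbC : b ≤ C)
    (hL : |a - b| ≤ L) : |a ^ p - b ^ p| ≤ p * C ^ (p - 1) * L := by
  wlog h : b ≤ a generalizing a b with H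
  · rw [abs_sub_comm]
    exact H hb ha hbC haC (by rwa [abs_sub_comm]) (le_of_not_ge h)
  have h1 : b ^ p ≤ a ^ p := Real.rpow_le_rpow hb h (by linarith)
  have hp1 : 0 ≤ p - 1 := by linarith
  rw [abs_of_nonneg (by linarith)]
  refine (aux_mvt hp hb h).trans ?_
  have h2 : a - b ≤ L := (le_abs_self _).trans hL
  have : 0 ≤ a - b := by linarith
  have hC : 0 ≤ C := ha.trans haC
  gcongr

theorem cube_finite (n : ℕ) (h : ℝ) (hh : 0 < h) :
    cube n (fun _ => 0) h ⊆ Metric.closedBall 0 (Real.sqrt (n * h ^ 2)) := by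
  intro y hy
  rw [mem_closedBall_zero_iff, EuclideanSpace.norm_eq]
  apply Real.sqrt_le_sqrt
  calc ∑ i, ‖y i‖ ^ 2 ≤ ∑ _i : Fin n, h ^ 2 := by
        apply Finset.sum_le_sum
        intro i _
        have h1 := hy i
        simp only [sub_zero] at h1
        rw [Real.norm_eq_abs]
        have := abs_nonneg (y i)
        gcongr
    _ = n * h ^ 2 := by simp

theorem V_nonneg {n : ℕ} {p s q : ℝ} {V : Rn n → ℝ} (hV : IsPotential n p s q V) :
    ∀ᵐ x ∂(volume : Measure (Rn n)), 0 ≤ V x := by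
  obtain ⟨b, _, _, _, _, hb⟩ := hV.exists_b
  have hA := (hb 1 one_pos).1
  have hmeas : ∀ h : ℝ, MeasurableSet (cube n (fun _ => 0) h) := by
    intro h
    have : cube n (fun _ => 0) h = ⋂ i, {y : Rn n | |y i - 0| < h} := by
      ext y; simp [cube]
    rw [this]
    apply MeasurableSet.iInter
    intro i
    apply measurableSet_lt _ measurable_const
    fun_prop
  have key : ∀ k : ℕ, ∀ᵐ x ∂(volume : Measure (Rn n)), x ∈ cube n (fun _ => 0) ((k : ℝ) + 1) →
      0 ≤ V x := by
    intro k
    have hk : (0 : ℝ) < (k : ℝ) + 1 := by positivity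
    rw [← ae_restrict_iff' (hmeas _)]
    set Q := cube n (fun _ => 0) ((k : ℝ) + 1) with hQ
    have hsub := cube_finite n _ hk
    have hint : IntegrableOn (minusPart V) Q :=
      (hV.minusPart_locInt.integrableOn_isCompact (isCompact_closedBall _ _)).mono_set hsub
    have hn0 : ∀ x, 0 ≤ minusPart V x := fun x => le_max_right _ _
    have hfin : volume Q ≠ ⊤ := ((measure_mono hsub).trans_lt measure_closedBall_lt_top).ne
    by_cases h0 : ∫ x in Q, minusPart V x = 0
    · rw [integral_eq_zero_iff_of_nonneg hn0 hint] at h0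
      filter_upwards [h0] with x hx
      have hx' : max (-V x) 0 = 0 := hx
      have := max_eq_right_iff.1 hx'
      linarith
    · have hpos : 0 < ∫ x in Q, minusPart V x :=
        lt_of_le_of_ne (integral_nonneg hn0) (Ne.symm h0)
      have hvol : volume Q ≠ 0 := by
        intro hz
        apply h0
        rw [Measure.restrict_eq_zero.2 hz]; simp
      have havg : 0 < ⨍ y in Q, minusPart V y := by
        rw [setAverage_eq, smul_eq_mul]
        have : 0 < volume.real Q := ENNReal.toReal_pos hvol hfin
        positivity
      have hle := (le_iSup₂_of_le (f := fun (c : Fin n → ℝ) (h : ℝ) => ⨆ (_ : 0 < h),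
        ENNReal.ofReal (⨍ y in cube n c h, minusPart V y) *
          essSup (fun y => (ENNReal.ofReal ((fun x => max (b x) (1 / ((1 : ℕ) : ℝ)) / b x *
            plusPart V x) y))⁻¹) (volume.restrict (cube n c h))) (fun _ => 0) ((k : ℝ) + 1)
          (le_iSup_of_le hk le_rfl))
      have hlt := lt_of_le_of_lt hle hA
      have hess := ENNReal.lt_top_of_mul_ne_top_right hlt.ne
        (by simpa using havg)
      filter_upwards [ae_lt_of_essSup_lt hess] with x hx
      by_contra hneg
      push Not at hneg
      have : plusPart V x = 0 := max_eq_right hneg.le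
      simp [this] at hx
  filter_upwards [ae_all_iff.2 key] with x hx
  obtain ⟨k, hk⟩ := exists_nat_gt ‖x‖
  apply hx k
  intro i
  have := PiLp.norm_apply_le x i
  rw [Real.norm_eq_abs] at this
  simp only [sub_zero]
  linarith

theorem K_bounds {n : ℕ} {p s lam Lam : ℝ} {K : Rn n → ℝ} (hp : 1 < p) (hs1 : s < 1)
    (hlam : 0 < lam) (hlL : lam ≤ Lam) (hK : KernelClass n p s lam Lam K) :
    ∃ D : ℝ, 0 ≤ D ∧ ∀ z, z ≠ 0 → 0 ≤ K z ∧ K z ≤ D * kk n p s z := by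
  have hc : 0 ≤ cnps n p s := by
    unfold cnps
    have h1 : 0 < Real.Gamma (((n : ℝ) + p) / 2) := Real.Gamma_pos_of_pos (by positivity)
    have h2 : 0 < Real.Gamma ((p + 1) / 2) := Real.Gamma_pos_of_pos (by linarith)
    have h3 : 0 < 1 - s := by linarith
    have h4 := Real.pi_pos
    positivity
  have hL : 0 < Lam := by linarith
  refine ⟨cnps n p s * Lam, by positivity, fun z hz => ⟨?_, (hK.2.2 z hz).2⟩⟩
  refine le_trans ?_ (hK.2.2 z hz).1
  have := kk_nonneg n p s z
  unfold kk at this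
  positivity

theorem kk_cmp {n : ℕ} {p s c : ℝ} (hps : 0 ≤ p * s) (hc : 0 < c) {a b : Rn n} (ha : a ≠ 0)
    (hab : ‖a‖ ≤ c * ‖b‖) : kk n p s b ≤ c ^ ((n : ℝ) + p * s) * kk n p s a := by
  unfold kk
  have ha' : 0 < ‖a‖ := norm_pos_iff.2 ha
  have h1 : ‖a‖ / c ≤ ‖b‖ := by rw [div_le_iff₀ hc]; linarith
  have h2 : 0 < ‖a‖ / c := by positivity
  refine (Real.rpow_le_rpow_of_nonpos h2 h1
    (by have : (0 : ℝ) ≤ n := Nat.cast_nonneg n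
        linarith)).trans (le_of_eq ?_)
  have e : -(n : ℝ) - p * s = -((n : ℝ) + p * s) := by ring
  rw [Real.div_rpow ha'.le hc.le, e, Real.rpow_neg hc.le, div_inv_eq_mul, mul_comm]

theorem kk_le_GG {n : ℕ} {p s ρ : ℝ} (hp : 1 < p) (hρ : 0 < ρ) {z : Rn n} (hz : ρ ≤ ‖z‖) :
    kk n p s z ≤ (min 1 ρ ^ p)⁻¹ * GG n p s z := by
  have hm : 0 < min 1 ρ := lt_min one_pos hρ
  have hm' : 0 < min 1 ρ ^ p := by positivity
  rw [← div_eq_inv_mul, le_div_iff₀ hm']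
  unfold GG
  rw [mul_comm]
  apply mul_le_mul_of_nonneg_right _ (kk_nonneg _ _ _ _)
  apply Real.rpow_le_rpow hm.le _ (by linarith)
  exact min_le_min le_rfl hz

theorem tail_int {n : ℕ} {p s r : ℝ} (hp : 1 < p) (hs0 : 0 < s)
    (hG : Integrable (GG n p s)) {Ω : Set (Rn n)} {x₀ : Rn n} (hr : 0 < r)
    (hB : Metric.ball x₀ r ⊆ Ω) {u w : Rn n → ℝ} (hum : Measurable u) (hwm : Measurable w)
    (hw0 : ∀ x, 0 ≤ w x) (hwu : ∀ x, w x ≤ |u x|)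
    (hgu : IntegrableOn (gagliardoIntegrand n p s u) (R2n n Ω)) :
    IntegrableOn (fun y => w y ^ (p - 1) * kk n p s (x₀ - y)) (Metric.ball x₀ r)ᶜ := by
  have h1 : IntegrableOn (gagliardoIntegrand n p s u) (Metric.ball x₀ (r / 2) ×ˢ Set.univ) := by
    apply hgu.mono_set
    rintro ⟨x, y⟩ ⟨hx, -⟩
    exact Or.inl (hB (Metric.ball_subset_ball (by linarith) hx))
  rw [IntegrableOn, Measure.volume_eq_prod, ← Measure.prod_restrict] at h1
  have h2 := h1.prod_right_ae
  have h3 := ae_restrict_mem (μ := (volume : Measure (Rn n)))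
    (Metric.isOpen_ball (x := x₀) (ε := r / 2)).measurableSet
  have : (ae ((volume : Measure (Rn n)).restrict (Metric.ball x₀ (r / 2)))).NeBot := by
    rw [ae_neBot, Ne, Measure.restrict_eq_zero]
    exact (Metric.measure_ball_pos _ _ (by linarith)).ne'
  obtain ⟨x₁, hx₁, hx₁B⟩ := (h2.and h3).exists
  rw [Measure.restrict_univ] at hx₁
  have hps : 0 ≤ p * s := by positivity
  set c : ℝ := 2 ^ ((n : ℝ) + p * s) with hc
  have hc0 : 0 ≤ c := by positivity
  set m : ℝ := (min 1 (r / 2) ^ p)⁻¹ with hm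
  have hGx : Integrable (fun y => GG n p s (x₁ - y)) := hG.comp_sub_left x₁
  have hdom := ((hGx.const_mul ((1 + 2 ^ (p - 1) * |u x₁| ^ p) * m)).add
    (hx₁.const_mul (2 ^ (p - 1)))).const_mul c
  refine Integrable.mono' hdom.integrableOn ?_ ?_
  · have := kk_meas n p s
    exact Measurable.aestronglyMeasurable (by fun_prop)
  refine ae_restrict_of_forall_mem Metric.isOpen_ball.measurableSet.compl ?_
  intro y hy
  have hy' : r ≤ ‖x₀ - y‖ := by
    rw [← dist_eq_norm, dist_comm]
    simpa using hy
  have hx' : ‖x₁ - x₀‖ < r / 2 := by rw [← dist_eq_norm]; exact hx₁B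
  have t1 : ‖x₁ - y‖ ≤ ‖x₁ - x₀‖ + ‖x₀ - y‖ := norm_sub_le_norm_sub_add_norm_sub _ _ _
  have t2 : ‖x₀ - y‖ ≤ ‖x₁ - x₀‖ + ‖x₁ - y‖ := by
    rw [norm_sub_rev x₁ x₀]; exact norm_sub_le_norm_sub_add_norm_sub _ _ _
  have hne : x₁ - y ≠ 0 := by
    intro h; rw [h, norm_zero] at t2; linarith
  have k1 : kk n p s (x₀ - y) ≤ c * kk n p s (x₁ - y) :=
    kk_cmp hps two_pos hne (by linarith)
  have k2 : kk n p s (x₁ - y) ≤ m * GG n p s (x₁ - y) :=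
    kk_le_GG hp (by linarith) (by linarith)
  have hk := kk_nonneg n p s (x₁ - y)
  have hk0 := kk_nonneg n p s (x₀ - y)
  have hw1 : 0 ≤ w y ^ (p - 1) := Real.rpow_nonneg (hw0 y) _
  have w1 : w y ^ (p - 1) ≤ 1 + |u y| ^ p := by
    have hup : 0 ≤ |u y| ^ p := by positivity
    rcases le_total (w y) 1 with h | h
    · have := Real.rpow_le_one (hw0 y) h (show 0 ≤ p - 1 by linarith)
      linarith
    · have a1 := Real.rpow_le_rpow_of_exponent_le h (show p - 1 ≤ p by linarith)
      have a2 := Real.rpow_le_rpow (hw0 y) (hwu y) (show 0 ≤ p by linarith)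
      linarith
  have w2 : |u y| ^ p ≤ 2 ^ (p - 1) * (|u x₁| ^ p + |u x₁ - u y| ^ p) := by
    refine le_trans (Real.rpow_le_rpow (abs_nonneg _) ?_ (by linarith))
      (aux_conv hp.le (abs_nonneg _) (abs_nonneg _))
    have : u y = u x₁ - (u x₁ - u y) := by ring
    calc |u y| = |u x₁ - (u x₁ - u y)| := by rw [← this]
      _ ≤ _ := abs_sub _ _
  rw [Real.norm_of_nonneg (by positivity)]
  simp only [Pi.add_apply, gag_eq]
  set A := |u x₁| ^ p
  have hA : 0 ≤ A := by positivity
  set D := |u x₁ - u y| ^ p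
  have hD : 0 ≤ D := by positivity
  have h2p : (0 : ℝ) ≤ 2 ^ (p - 1) := by positivity
  calc w y ^ (p - 1) * kk n p s (x₀ - y)
      ≤ (1 + 2 ^ (p - 1) * (A + D)) * (c * kk n p s (x₁ - y)) := by
        apply mul_le_mul (by linarith) k1 hk0 (by positivity)
    _ = c * ((1 + 2 ^ (p - 1) * A) * kk n p s (x₁ - y) + 2 ^ (p - 1) * (D * kk n p s (x₁ - y))) := by
        ring
    _ ≤ _ := by
        rw [mul_assoc _ m]
        gcongr

theorem tail_part {n : ℕ} {p s r D C₀ : ℝ} (hp : 1 < p) (hs0 : 0 < s) {x₀ : Rn n} (hr : 0 < r)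
    {K : Rn n → ℝ} (hKm : Measurable K) (hD : 0 ≤ D)
    (hK : ∀ z, z ≠ 0 → 0 ≤ K z ∧ K z ≤ D * kk n p s z)
    {w ζ : Rn n → ℝ} (hwm : Measurable w) (hw0 : ∀ x, 0 ≤ w x)
    (hwB : IntegrableOn w (Metric.ball x₀ r))
    (hζm : Measurable ζ) (hζ0 : ∀ x, 0 ≤ ζ x) (hζC : ∀ x, ζ x ≤ C₀)
    (hζs : tsupport ζ ⊆ Metric.ball x₀ r)
    (ht : IntegrableOn (fun y => w y ^ (p - 1) * kk n p s (x₀ - y)) (Metric.ball x₀ r)ᶜ) :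
    IntegrableOn (fun z : Rn n × Rn n => w z.1 * ζ z.1 ^ p * (w z.2 ^ (p - 1) * K (z.1 - z.2)))
      (Metric.ball x₀ r ×ˢ (Metric.ball x₀ r)ᶜ) ∧
    ∫ z in (Metric.ball x₀ r ×ˢ (Metric.ball x₀ r)ᶜ),
      w z.1 * ζ z.1 ^ p * (w z.2 ^ (p - 1) * K (z.1 - z.2)) ≤
    sSup ((fun x => ∫ y in (Metric.ball x₀ r)ᶜ, w y ^ (p - 1) * K (x - y)) '' tsupport ζ) *
      (∫ y in Metric.ball x₀ r, |w y * ζ y ^ p|) := by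
  set B := Metric.ball x₀ r with hBdef
  have hBm : MeasurableSet B := Metric.isOpen_ball.measurableSet
  have hp0 : 0 < p := by linarith
  have hps : 0 ≤ p * s := by positivity
  have hkm := kk_meas n p s
  obtain ⟨ρ, ⟨hρ0, hρr⟩, hρ⟩ := exists_pos_lt_subset_ball hr (isClosed_tsupport ζ) hζs
  set c : ℝ := r / (r - ρ) with hc
  have hrρ : 0 < r - ρ := by linarith
  have hc0 : 0 < c := by positivity
  set E : ℝ := D * c ^ ((n : ℝ) + p * s) with hE
  have hE0 : 0 ≤ E := by positivity
  have key : ∀ x ∈ tsupport ζ, ∀ y ∈ Bᶜ, 0 ≤ K (x - y) ∧ K (x - y) ≤ E * kk n p s (x₀ - y) := by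
    intro x hx y hy
    have hy' : r ≤ ‖x₀ - y‖ := by
      rw [← dist_eq_norm, dist_comm]
      simpa [hBdef] using hy
    have hx' : ‖x - x₀‖ < ρ := by rw [← dist_eq_norm]; exact hρ hx
    have t2 : ‖x₀ - y‖ ≤ ‖x - x₀‖ + ‖x - y‖ := by
      rw [norm_sub_rev x x₀]; exact norm_sub_le_norm_sub_add_norm_sub _ _ _
    have hne : x - y ≠ 0 := by
      intro h; rw [h, norm_zero] at t2; linarith
    have hne0 : x₀ - y ≠ 0 := by
      intro h; rw [h, norm_zero] at hy'; linarith
    refine ⟨(hK _ hne).1, (hK _ hne).2.trans ?_⟩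
    rw [hE, mul_assoc]
    refine mul_le_mul_of_nonneg_left (kk_cmp hps hc0 hne0 ?_) hD
    rw [hc, div_mul_eq_mul_div, le_div_iff₀ hrρ]
    nlinarith
  have hφ0 : ∀ x, 0 ≤ w x * ζ x ^ p := fun x => mul_nonneg (hw0 x) (Real.rpow_nonneg (hζ0 x) _)
  have hφi : IntegrableOn (fun x => w x * ζ x ^ p) B := by
    refine Integrable.mono' (hwB.const_mul (C₀ ^ p)) (by fun_prop) (Eventually.of_forall fun x => ?_)
    rw [Real.norm_of_nonneg (hφ0 x), mul_comm]
    exact mul_le_mul_of_nonneg_right (Real.rpow_le_rpow (hζ0 x) (hζC x) hp0.le) (hw0 x)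
  have hzero : ∀ x, x ∉ tsupport ζ → w x * ζ x ^ p = 0 := by
    intro x hx
    rw [image_eq_zero_of_notMem_tsupport hx, Real.zero_rpow hp0.ne', mul_zero]
  have hI : IntegrableOn (fun z : Rn n × Rn n => w z.1 * ζ z.1 ^ p *
      (w z.2 ^ (p - 1) * K (z.1 - z.2))) (B ×ˢ Bᶜ) := by
    have hdom : IntegrableOn (fun z : Rn n × Rn n => w z.1 * ζ z.1 ^ p *
        (E * (w z.2 ^ (p - 1) * kk n p s (x₀ - z.2)))) (B ×ˢ Bᶜ) := by
      rw [IntegrableOn, Measure.volume_eq_prod, ← Measure.prod_restrict]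
      exact Integrable.mul_prod hφi (ht.const_mul E)
    refine Integrable.mono' hdom (Measurable.aestronglyMeasurable (by fun_prop)) ?_
    refine ae_restrict_of_forall_mem (hBm.prod hBm.compl) ?_
    rintro ⟨x, y⟩ ⟨hx, hy⟩
    simp only
    by_cases hxs : x ∈ tsupport ζ
    · have h := key x hxs y hy
      have hw1 : 0 ≤ w y ^ (p - 1) := Real.rpow_nonneg (hw0 y) _
      rw [Real.norm_of_nonneg (mul_nonneg (hφ0 x) (mul_nonneg hw1 h.1))]
      refine mul_le_mul_of_nonneg_left ?_ (hφ0 x)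
      have := mul_le_mul_of_nonneg_left h.2 hw1
      linarith
    · rw [hzero x hxs]; simp
  refine ⟨hI, ?_⟩
  have htail : ∀ x ∈ tsupport ζ, ∫ y in Bᶜ, w y ^ (p - 1) * K (x - y) ≤
      ∫ y in Bᶜ, E * (w y ^ (p - 1) * kk n p s (x₀ - y)) := by
    intro x hx
    apply integral_mono_of_nonneg
    · refine ae_restrict_of_forall_mem hBm.compl fun y hy => ?_
      exact mul_nonneg (Real.rpow_nonneg (hw0 y) _) (key x hx y hy).1
    · exact ht.const_mul E
    · refine ae_restrict_of_forall_mem hBm.compl fun y hy => ?_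
      have := mul_le_mul_of_nonneg_left (key x hx y hy).2 (Real.rpow_nonneg (hw0 y) (p - 1))
      simp only
      linarith
  have hbdd : BddAbove ((fun x => ∫ y in Bᶜ, w y ^ (p - 1) * K (x - y)) '' tsupport ζ) := by
    refine ⟨∫ y in Bᶜ, E * (w y ^ (p - 1) * kk n p s (x₀ - y)), ?_⟩
    rintro _ ⟨x, hx, rfl⟩
    exact htail x hx
  set T := sSup ((fun x => ∫ y in Bᶜ, w y ^ (p - 1) * K (x - y)) '' tsupport ζ) with hT
  have hI' := hI
  rw [Measure.volume_eq_prod] at hI' ⊢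
  rw [setIntegral_prod _ hI', ← integral_const_mul]
  have hI2 := hI'
  rw [IntegrableOn, ← Measure.prod_restrict] at hI2
  apply integral_mono hI2.integral_prod_left
  · exact (hφi.abs).const_mul T
  · intro x
    simp only
    rw [integral_const_mul, abs_of_nonneg (hφ0 x), mul_comm T]
    by_cases hxs : x ∈ tsupport ζ
    · exact mul_le_mul_of_nonneg_left (le_csSup hbdd ⟨x, hxs, rfl⟩) (hφ0 x)
    · rw [hzero x hxs]; simp

theorem pair_int {n : ℕ} {p s D : ℝ} (hp : 1 < p) {Ω : Set (Rn n)} (hΩ : MeasurableSet Ω)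
    {K : Rn n → ℝ} (hKm : Measurable K)
    (hK : ∀ z, z ≠ 0 → 0 ≤ K z ∧ K z ≤ D * kk n p s z)
    {u φ : Rn n → ℝ} (hum : Measurable u) (hφm : Measurable φ)
    (hgu : IntegrableOn (gagliardoIntegrand n p s u) (R2n n Ω))
    (hgφ : IntegrableOn (gagliardoIntegrand n p s φ) (R2n n Ω))
    (hφ : ∀ x, x ∉ Ω → φ x = 0) :
    Integrable (fun z : Rn n × Rn n =>
      Hp p (u z.1 - u z.2) * (φ z.1 - φ z.2) * K (z.1 - z.2)) := by
  rw [← integrableOn_iff_integrable_of_support_subset (s := R2n n Ω)]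
  · refine Integrable.mono' ((hgu.add hgφ).const_mul D) ?_ ?_
    · unfold Hp
      exact Measurable.aestronglyMeasurable (by fun_prop)
    · refine Eventually.of_forall ?_
      rintro ⟨x, y⟩
      simp only [Pi.add_apply, gag_eq]
      by_cases hxy : x - y = 0
      · have : x = y := sub_eq_zero.1 hxy
        subst this
        simp [Real.zero_rpow (show p ≠ 0 by linarith)]
      · have hk := hK _ hxy
        rw [norm_mul, norm_mul, Real.norm_eq_abs, Real.norm_eq_abs, abs_Hp hp,
          Real.norm_of_nonneg hk.1]
        have key : ∀ a b : ℝ, 0 ≤ a → 0 ≤ b → a ^ (p - 1) * b ≤ a ^ p + b ^ p := by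
          intro a b ha hb
          have e : ∀ t : ℝ, 0 ≤ t → t ^ (p - 1) * t = t ^ p := by
            intro t ht
            rcases eq_or_lt_of_le ht with h | h
            · rw [← h, mul_zero, Real.zero_rpow (by linarith)]
            · rw [← Real.rpow_add_one h.ne']; congr 1; ring
          have h1 := Real.rpow_nonneg ha p
          have h2 := Real.rpow_nonneg hb p
          rcases le_total a b with h | h
          · have := mul_le_mul_of_nonneg_right
              (Real.rpow_le_rpow ha h (show 0 ≤ p - 1 by linarith)) hb
            rw [e b hb] at this; linarith
          · have := mul_le_mul_of_nonneg_left h (Real.rpow_nonneg ha (p - 1))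
            rw [e a ha] at this; linarith
        calc _ ≤ (|u x - u y| ^ p + |φ x - φ y| ^ p) * (D * kk n p s (x - y)) :=
              mul_le_mul (key _ _ (abs_nonneg _) (abs_nonneg _)) hk.2 hk.1 (by positivity)
          _ = _ := by ring
  · rintro ⟨x, y⟩ hz
    by_contra hn
    apply hz
    have hn' : ¬ (x ∈ Ω ∨ y ∈ Ω) := hn
    push Not at hn'
    simp [hφ x hn'.1, hφ y hn'.2]

theorem K_int {n : ℕ} {p s D : ℝ} {S : Set (Rn n × Rn n)}
    {K : Rn n → ℝ} (hKm : Measurable K)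
    (hK : ∀ z, z ≠ 0 → 0 ≤ K z ∧ K z ≤ D * kk n p s z) {f : Rn n × Rn n → ℝ} (hfm : Measurable f)
    (hf0 : ∀ z, 0 ≤ f z) (hfd : ∀ x, f (x, x) = 0)
    (hf : IntegrableOn (fun z => f z * kk n p s (z.1 - z.2)) S) :
    IntegrableOn (fun z => f z * K (z.1 - z.2)) S := by
  refine Integrable.mono' (hf.const_mul D) ?_ (Eventually.of_forall ?_)
  · exact Measurable.aestronglyMeasurable (by fun_prop)
  · rintro ⟨x, y⟩
    by_cases hxy : x - y = 0
    · have : x = y := sub_eq_zero.1 hxy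
      subst this
      simp [hfd]
    · have hk := hK _ hxy
      simp only
      rw [Real.norm_of_nonneg (mul_nonneg (hf0 _) hk.1)]
      have := mul_le_mul_of_nonneg_left hk.2 (hf0 (x, y))
      linarith

/-- nonlocal Caccioppoli type inequality (Theorem 1.5). -/
theorem nonlocal_caccioppoli
    (n : ℕ) (hn : 1 ≤ n) (p s q lam Lam : ℝ)
    (hp : 1 < p) (hs0 : 0 < s) (hs1 : s < 1)
    (hq : (n : ℝ) / (p * s) < q) (hq1 : 1 < (n : ℝ) / (p * s))
    (hlam : 0 < lam) (hlamLam : lam ≤ Lam)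
    (Ω : Set (Rn n)) (hΩopen : IsOpen Ω) (hΩconn : IsConnected Ω)
    (hΩbdd : Bornology.IsBounded Ω)
    (V : Rn n → ℝ) (hV : IsPotential n p s q V)
    (g : Rn n → ℝ) (hg : MemWsp n p s Set.univ g)
    (K : Rn n → ℝ) (hK : KernelClass n p s lam Lam K)
    (x₀ : Rn n) (hx₀ : x₀ ∈ Ω) (r : ℝ) (hr : 0 < r)
    (h2r : Metric.ball x₀ (2 * r) ⊆ Ω)
    (u : Rn n → ℝ) (hu : WeakSubsolution n p s Ω K V g u)
    (M : ℝ) (hM : 0 < M)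
    (ζ : Rn n → ℝ) (hζ : ContDiff ℝ (⊤ : ℕ∞) ζ) (hζc : HasCompactSupport ζ)
    (hζs : tsupport ζ ⊆ Metric.ball x₀ r) (hζ0 : ∀ x, 0 ≤ ζ x) :
    letI w : Rn n → ℝ := fun y => max (u y - M) 0
    (∫ y in Metric.ball x₀ r, (w y * ζ y) ^ p * V y) +
      (∫ z in (Metric.ball x₀ r) ×ˢ (Metric.ball x₀ r),
        |ζ z.1 * w z.1 - ζ z.2 * w z.2| ^ p * K (z.1 - z.2)) ≤
    (2 : ℝ) ^ (2 * p + 1) * (1 / 4 + (1 / 2) * (2 * (p - 1)) ^ (p - 1)) *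
      (∫ z in (Metric.ball x₀ r) ×ˢ (Metric.ball x₀ r),
        (max (w z.1) (w z.2)) ^ p * |ζ z.1 - ζ z.2| ^ p * K (z.1 - z.2)) +
    (2 : ℝ) ^ (p + 2) *
      sSup ((fun x => ∫ y in (Metric.ball x₀ r)ᶜ, w y ^ (p - 1) * K (x - y)) '' tsupport ζ) *
      (∫ y in Metric.ball x₀ r, |w y * ζ y ^ p|) := by
  generalize hwg : (fun y : Rn n => max (u y - M) 0) = w
  obtain ⟨⟨⟨⟨hum, hup, hgu⟩, hVp, hVm⟩, -⟩, hsub⟩ := hu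
  have hp0 : 0 < p := by linarith
  have hp1 : 0 < p - 1 := by linarith
  have hwdef : ∀ y, w y = max (u y - M) 0 := fun _ => by rw [← hwg]
  have hw0 : ∀ x, 0 ≤ w x := fun x => by rw [hwdef]; exact le_max_right _ _
  have hwu : ∀ x, w x ≤ |u x| := fun x => by
    rw [hwdef]
    exact max_le (by linarith [le_abs_self (u x)]) (abs_nonneg _)
  have hwm : Measurable w := by
    rw [← hwg]
    fun_prop
  have hwwu : ∀ x y, |w x - w y| ≤ |u x - u y| := by
    intro x y
    rw [hwdef, hwdef]
    refine (abs_max_sub_max_le_abs (u x - M) (u y - M) 0).trans (le_of_eq ?_)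
    congr 1; ring
  clear hwg
  have hΩm := hΩopen.measurableSet
  set B := Metric.ball x₀ r with hBdef
  have hBm : MeasurableSet B := Metric.isOpen_ball.measurableSet
  have hBΩ : B ⊆ Ω := (Metric.ball_subset_ball (by linarith)).trans h2r
  obtain ⟨D, hD, hKb⟩ := K_bounds hp hs1 hlam hlamLam hK
  have hKm := hK.1
  have hkm := kk_meas n p s
  have hG := GG_int n hn p s hp hs0 hs1
  have hζm : Measurable ζ := hζ.continuous.measurable
  -- bounds on the cutoff
  obtain ⟨C₁, hC₁⟩ := hζc.exists_bound_of_continuous hζ.continuous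
  obtain ⟨L, hL⟩ := ContDiff.lipschitzWith_of_hasCompactSupport hζc hζ (by simp)
  have hC₁0 : 0 ≤ C₁ := (norm_nonneg _).trans (hC₁ x₀)
  have hζC : ∀ x, ζ x ≤ C₁ := fun x => (le_abs_self _).trans (hC₁ x)
  have hζL : ∀ x y, |ζ x - ζ y| ≤ L * ‖x - y‖ := fun x y => by
    have := hL.dist_le_mul x y
    rwa [Real.dist_eq, dist_eq_norm] at this
  have hζmin := lip_min hζ0 hζC hζL L.2 hC₁0
  have hη0 : ∀ x, 0 ≤ ζ x ^ p := fun x => Real.rpow_nonneg (hζ0 x) _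
  have hηC : ∀ x, ζ x ^ p ≤ C₁ ^ p := fun x => Real.rpow_le_rpow (hζ0 x) (hζC x) hp0.le
  have hηmin := lip_min (η := fun x => ζ x ^ p) (L := p * C₁ ^ (p - 1) * L) hη0 hηC
    (fun x y => by
      have := lip_pow hp (hζ0 x) (hζ0 y) (hζC x) (hζC y) (hζL x y)
      rwa [← mul_assoc] at this) (by positivity) (by positivity)
  have hζoff : ∀ x, x ∉ B → ζ x = 0 := fun x hx =>
    image_eq_zero_of_notMem_tsupport fun h => hx (hζs h)
  -- facts about w
  have hwp : IntegrableOn (fun x => |w x| ^ p) Ω := by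
    refine Integrable.mono' hup (Measurable.aestronglyMeasurable (by fun_prop)) (Eventually.of_forall fun x => ?_)
    rw [Real.norm_of_nonneg (by positivity), abs_of_nonneg (hw0 x)]
    exact Real.rpow_le_rpow (hw0 x) (hwu x) hp0.le
  have hgw : IntegrableOn (gagliardoIntegrand n p s w) (R2n n Ω) := by
    refine Integrable.mono' hgu (gag_meas p s hwm).aestronglyMeasurable
      (Eventually.of_forall fun z => ?_)
    rw [gag_eq, gag_eq]
    have hk := kk_nonneg n p s (z.1 - z.2)
    rw [Real.norm_of_nonneg (by positivity)]
    exact mul_le_mul_of_nonneg_right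
      (Real.rpow_le_rpow (abs_nonneg _) (hwwu _ _) hp0.le) hk
  have hwB : IntegrableOn w B := by
    have h1 : IntegrableOn (fun x => 1 + |w x| ^ p) B :=
      (integrableOn_const (C := (1 : ℝ)) (measure_ball_lt_top.ne)).add (hwp.mono_set hBΩ)
    refine Integrable.mono' h1 hwm.aestronglyMeasurable (Eventually.of_forall fun x => ?_)
    rw [Real.norm_eq_abs]
    rcases le_total |w x| 1 with h | h
    · have : 0 ≤ |w x| ^ p := by positivity
      linarith
    · have := Real.self_le_rpow_of_one_le h hp.le
      linarith
  -- the test function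
  set φ : Rn n → ℝ := fun x => w x * ζ x ^ p with hφdef
  have hφ0 : ∀ x, 0 ≤ φ x := fun x => mul_nonneg (hw0 x) (hη0 x)
  have hφm : Measurable φ := by rw [hφdef]; fun_prop
  have hφu : ∀ x, φ x ≤ C₁ ^ p * |u x| := fun x => by
    rw [mul_comm]
    exact mul_le_mul (hwu x) (hηC x) (hη0 x) (abs_nonneg _)
  have hφup : ∀ x, |φ x| ^ p ≤ (C₁ ^ p) ^ p * |u x| ^ p := fun x => by
    rw [← Real.mul_rpow (by positivity) (abs_nonneg _), abs_of_nonneg (hφ0 x)]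
    exact Real.rpow_le_rpow (hφ0 x) (hφu x) hp0.le
  have hφoff : ∀ x, x ∉ B → φ x = 0 := fun x hx => by
    simp only [hφdef]
    rw [hζoff x hx, Real.zero_rpow hp0.ne', mul_zero]
  have hgφ : IntegrableOn (gagliardoIntegrand n p s φ) (R2n n Ω) := by
    refine gag_prod (η := fun x => ζ x ^ p) (C := C₁ ^ p + p * C₁ ^ (p - 1) * L) hp hG hΩm hwm
      (by fun_prop) hwp hgw (by positivity) (fun x => ?_) hηmin
    rw [abs_of_nonneg (hη0 x)]
    have : 0 ≤ p * C₁ ^ (p - 1) * L := by positivity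
    linarith [hηC x]
  have hVmeas := hV.measurable
  have hplm : Measurable (plusPart V) := by unfold plusPart; fun_prop
  have hmim : Measurable (minusPart V) := by unfold minusPart; fun_prop
  have hφV : ∀ f : Rn n → ℝ, Measurable f → (∀ x, 0 ≤ f x) →
      IntegrableOn (fun x => |u x| ^ p * f x) Ω → IntegrableOn (fun x => |φ x| ^ p * f x) Ω := by
    intro f hfm hf0 hf
    refine Integrable.mono' (hf.const_mul ((C₁ ^ p) ^ p)) (by fun_prop)
      (Eventually.of_forall fun x => ?_)
    rw [Real.norm_of_nonneg (mul_nonneg (by positivity) (hf0 x)), ← mul_assoc]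
    exact mul_le_mul_of_nonneg_right (hφup x) (hf0 x)
  have hφY : MemY0 n p s Ω V φ := by
    refine ⟨⟨⟨hφm, ?_, hgφ⟩, Eventually.of_forall fun x hx => hφoff x fun h => hx (hBΩ h)⟩,
      hφV _ hplm (fun x => le_max_right _ _) hVp, hφV _ hmim (fun x => le_max_right _ _) hVm⟩
    refine Integrable.mono' (hup.const_mul ((C₁ ^ p) ^ p)) (Measurable.aestronglyMeasurable (by fun_prop))
      (Eventually.of_forall fun x => ?_)
    rw [Real.norm_of_nonneg (by positivity)]
    exact hφup x
  have hweak := hsub φ hφY hφ0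
  -- the potential term
  have hVint : Integrable (fun x => V x * (|u x| ^ (p - 2) * u x) * φ x) := by
    rw [← integrableOn_iff_integrable_of_support_subset (s := Ω)]
    · refine Integrable.mono' ((hVp.add hVm).const_mul (C₁ ^ p)) (by fun_prop)
        (Eventually.of_forall fun x => ?_)
      have hVabs : |V x| ≤ plusPart V x + minusPart V x := by
        have h1 : V x ≤ plusPart V x := le_max_left _ _
        have h2 : -V x ≤ minusPart V x := le_max_left _ _
        have h3 : 0 ≤ plusPart V x := le_max_right _ _
        have h4 : 0 ≤ minusPart V x := le_max_right _ _
        exact abs_le.2 ⟨by linarith, by linarith⟩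
      have hH := abs_Hp (t := u x) hp
      unfold Hp at hH
      have e : |u x| ^ (p - 1) * |u x| = |u x| ^ p := by
        rcases eq_or_lt_of_le (abs_nonneg (u x)) with h | h
        · rw [← h, mul_zero, Real.zero_rpow (by linarith)]
        · rw [← Real.rpow_add_one h.ne']; congr 1; ring
      simp only [Pi.add_apply]
      rw [norm_mul, norm_mul, Real.norm_eq_abs, Real.norm_eq_abs, hH,
        Real.norm_of_nonneg (hφ0 x)]
      have hu1 : 0 ≤ |u x| ^ (p - 1) := by positivity
      calc |V x| * |u x| ^ (p - 1) * φ x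
          ≤ (plusPart V x + minusPart V x) * |u x| ^ (p - 1) * (C₁ ^ p * |u x|) := by
            apply mul_le_mul (mul_le_mul_of_nonneg_right hVabs hu1) (hφu x) (hφ0 x)
            exact mul_nonneg ((abs_nonneg _).trans hVabs) hu1
        _ = C₁ ^ p * ((plusPart V x + minusPart V x) * (|u x| ^ (p - 1) * |u x|)) := by ring
        _ = _ := by rw [e]; ring
    · intro x hx
      by_contra h
      apply hx
      simp only
      rw [hφoff x fun h' => h (hBΩ h'), mul_zero]
  have hpot : ∫ y in B, (w y * ζ y) ^ p * V y ≤
      ∫ x, V x * (|u x| ^ (p - 2) * u x) * φ x := by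
    rw [← integral_indicator hBm]
    have hV0 := V_nonneg hV
    apply integral_mono_of_nonneg
    · filter_upwards [hV0] with x hx
      by_cases hxB : x ∈ B
      · rw [Set.indicator_of_mem hxB]
        exact mul_nonneg (Real.rpow_nonneg (mul_nonneg (hw0 x) (hζ0 x)) _) hx
      · rw [Set.indicator_of_notMem hxB]; rfl
    · exact hVint
    · filter_upwards [hV0] with x hx
      by_cases hxB : x ∈ B
      · rw [Set.indicator_of_mem hxB]
        rcases le_total (u x) M with h | h
        · have hwx : w x = 0 := by rw [hwdef]; exact max_eq_right (by linarith)
          simp [hφdef, hwx, hp0.ne']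
        · have hwx : w x = u x - M := by rw [hwdef]; exact max_eq_left (by linarith)
          have hux : 0 ≤ u x := by linarith
          have hH := Hp_of_nonneg hp hux
          unfold Hp at hH
          rw [hH, Real.mul_rpow (hw0 x) (hζ0 x)]
          have e : w x ^ (p - 1) * w x = w x ^ p := by
            rcases eq_or_lt_of_le (hw0 x) with h | h
            · rw [← h, mul_zero, Real.zero_rpow (by linarith)]
            · rw [← Real.rpow_add_one h.ne']; congr 1; ring
          have h1 : w x ^ (p - 1) ≤ u x ^ (p - 1) :=
            Real.rpow_le_rpow (hw0 x) (by linarith) hp1.le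
          have h2 := mul_le_mul_of_nonneg_right h1 (mul_nonneg hx (hφ0 x))
          rw [← e]
          simp only [hφdef] at h2 ⊢
          linarith
      · rw [Set.indicator_of_notMem hxB, hφoff x hxB]; simp
  have hpot0 : 0 ≤ ∫ y in B, (w y * ζ y) ^ p * V y := by
    apply integral_nonneg_of_ae
    filter_upwards [ae_restrict_of_ae (V_nonneg hV)] with x hx
    exact mul_nonneg (Real.rpow_nonneg (mul_nonneg (hw0 x) (hζ0 x)) _) hx
  -- the integrals in the statement
  have hIint : IntegrableOn (fun z : Rn n × Rn n =>
      |ζ z.1 * w z.1 - ζ z.2 * w z.2| ^ p * K (z.1 - z.2)) (B ×ˢ B) := by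
    have h1 := gag_prod (η := ζ) (C := C₁ + L) hp hG hΩm hwm hζm hwp hgw (by positivity)
      (fun x => by
        rw [abs_of_nonneg (hζ0 x)]
        have := L.2
        linarith [hζC x, show (0 : ℝ) ≤ L from L.2]) hζmin
    have h2 := h1.mono_set (show B ×ˢ B ⊆ R2n n Ω from fun z hz => Or.inl (hBΩ hz.1))
    refine K_int (s := s) (f := fun z : Rn n × Rn n => |ζ z.1 * w z.1 - ζ z.2 * w z.2| ^ p)
      hKm hKb (by fun_prop) (fun z => by positivity) (fun x => by simp [hp0.ne']) ?_
    refine h2.congr_fun (fun z _ => ?_) (hBm.prod hBm)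
    simp only [gag_eq]
    rw [mul_comm (w z.1), mul_comm (w z.2)]
  have hJint : IntegrableOn (fun z : Rn n × Rn n =>
      max (w z.1) (w z.2) ^ p * |ζ z.1 - ζ z.2| ^ p * K (z.1 - z.2)) (B ×ˢ B) := by
    refine K_int (s := s) (f := fun z : Rn n × Rn n =>
      max (w z.1) (w z.2) ^ p * |ζ z.1 - ζ z.2| ^ p)
      hKm hKb (by fun_prop) (fun z => ?_) (fun x => by simp [hp0.ne'])
      (maxw_int hp hG hΩm hBm hBΩ hwm hw0 hζm hwp (by positivity) hζmin)
    have : 0 ≤ max (w z.1) (w z.2) := le_max_of_le_left (hw0 _)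
    positivity
  have htint := tail_int hp hs0 hG hr hBΩ hum hwm hw0 hwu hgu
  obtain ⟨hT1, hTle⟩ := tail_part hp hs0 hr hKm hD hKb hwm hw0 hwB hζm hζ0 hζC hζs htint
  rw [← hBdef] at hT1 hTle
  have hFint := pair_int hp hΩm hKm hKb hum hφm hgu hgφ (fun x hx => hφoff x fun h => hx (hBΩ h))
  -- the symmetric tail term
  set T1 : Rn n × Rn n → ℝ :=
    fun z => w z.1 * ζ z.1 ^ p * (w z.2 ^ (p - 1) * K (z.1 - z.2)) with hT1def
  have hT2 : IntegrableOn (fun z => T1 z.swap) (Bᶜ ×ˢ B) := by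
    have h := hT1
    rw [IntegrableOn, Measure.volume_eq_prod, ← Measure.prod_restrict] at h
    have h' := h.swap
    rw [Measure.prod_restrict, ← Measure.volume_eq_prod] at h'
    exact h'
  have hT2eq : ∫ z in Bᶜ ×ˢ B, T1 z.swap = ∫ z in B ×ˢ Bᶜ, T1 z := by
    rw [Measure.volume_eq_prod]
    exact setIntegral_prod_swap B Bᶜ T1
  set I : Rn n × Rn n → ℝ := fun z => |ζ z.1 * w z.1 - ζ z.2 * w z.2| ^ p * K (z.1 - z.2) with hI
  set J : Rn n × Rn n → ℝ :=
    fun z => max (w z.1) (w z.2) ^ p * |ζ z.1 - ζ z.2| ^ p * K (z.1 - z.2) with hJ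
  set β : ℝ := 1 / 2 + (2 * (p - 1)) ^ (p - 1) with hβ
  have hβ0 : 0 ≤ β := by positivity
  have hm1 := hBm.prod hBm
  have hm2 := hBm.prod hBm.compl
  have hm3 := hBm.compl.prod hBm
  have i1 := (integrable_indicator_iff hm1).2 ((hIint.const_mul (2 ^ (-p))).sub (hJint.const_mul β))
  have i2 := (integrable_indicator_iff hm2).2 hT1
  have i3 := (integrable_indicator_iff hm3).2 hT2
  have hlow := integral_mono ((i1.sub i2).sub i3) hFint (by
    rintro ⟨x, y⟩
    simp only [Pi.sub_apply]
    by_cases hx : x ∈ B <;> by_cases hy : y ∈ B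
    · rw [Set.indicator_of_mem (by exact ⟨hx, hy⟩),
        Set.indicator_of_notMem (by simp [hy]), Set.indicator_of_notMem (by simp [hx])]
      simp only [hI, hJ, sub_zero, Pi.sub_apply]
      by_cases hxy : x - y = 0
      · have : x = y := sub_eq_zero.1 hxy
        subst this
        simp [hp0.ne']
      · have hk := (hKb _ hxy).1
        have := aux_pt (a := u x) (b := u y) (M := M) hp (hζ0 x) (hζ0 y)
        rw [← hwdef, ← hwdef, ← hβ] at this
        have := mul_le_mul_of_nonneg_right this hk
        simp only [hφdef]
        linarith
    · rw [Set.indicator_of_notMem (by simp [hy]),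
        Set.indicator_of_mem (by exact ⟨hx, hy⟩), Set.indicator_of_notMem (by simp [hx])]
      have hxy : x - y ≠ 0 := by
        intro h; rw [sub_eq_zero.1 h] at hx; exact hy hx
      have hk := (hKb _ hxy).1
      have := aux_tailpt (a := u x) (b := u y) (M := M) hp
      rw [← hwdef, ← hwdef] at this
      have := mul_le_mul_of_nonneg_right this (mul_nonneg (hη0 x) hk)
      simp only [hT1def, hφoff y hy]
      simp only [hφdef]
      linarith
    · rw [Set.indicator_of_notMem (by simp [hx]),
        Set.indicator_of_notMem (by simp [hx]), Set.indicator_of_mem (by exact ⟨hx, hy⟩)]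
      have hxy : y - x ≠ 0 := by
        intro h; rw [sub_eq_zero.1 h] at hy; exact hx hy
      have hk := (hKb _ hxy).1
      have hKs : K (x - y) = K (y - x) := by rw [← hK.2.1 (x - y), neg_sub]
      have hHs : Hp p (u x - u y) = - Hp p (u y - u x) := by rw [← Hp_neg, neg_sub]
      have := aux_tailpt (a := u y) (b := u x) (M := M) hp
      rw [← hwdef, ← hwdef] at this
      have := mul_le_mul_of_nonneg_right this (mul_nonneg (hη0 y) hk)
      simp only [hT1def, hφoff x hx, Prod.fst_swap, Prod.snd_swap, hKs, hHs]
      simp only [hφdef]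
      linarith
    · rw [Set.indicator_of_notMem (by simp [hx]),
        Set.indicator_of_notMem (by simp [hx]), Set.indicator_of_notMem (by simp [hy])]
      rw [hφoff x hx, hφoff y hy]; simp)
  rw [integral_sub' (i1.sub i2) i3, integral_sub' i1 i2, integral_indicator hm1,
    integral_indicator hm2, integral_indicator hm3, hT2eq,
    integral_sub' (hIint.const_mul (2 ^ (-p))) (hJint.const_mul β), integral_const_mul,
    integral_const_mul] at hlow
  have hJ0 : 0 ≤ ∫ z in B ×ˢ B, J z := by
    apply integral_nonneg
    rintro ⟨x, y⟩
    simp only [hJ, Pi.zero_apply]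
    by_cases hxy : x - y = 0
    · have : x = y := sub_eq_zero.1 hxy
      subst this
      simp [hp0.ne']
    · have hk := (hKb _ hxy).1
      have : 0 ≤ max (w x) (w y) := le_max_of_le_left (hw0 _)
      positivity
  have hT10 : 0 ≤ ∫ z in B ×ˢ Bᶜ, T1 z := by
    apply setIntegral_nonneg hm2
    rintro ⟨x, y⟩ ⟨hx, hy⟩
    have hxy : x - y ≠ 0 := by
      intro h; have h' := sub_eq_zero.1 h; simp only at hx hy; rw [h'] at hx; exact hy hx
    exact mul_nonneg (hφ0 x) (mul_nonneg (Real.rpow_nonneg (hw0 y) _) (hKb _ hxy).1)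
  rw [mul_assoc (2 ^ (p + 2))]
  unfold pairing at hweak
  set iP := ∫ y in B, (w y * ζ y) ^ p * V y
  set iI := ∫ z in B ×ˢ B, I z
  set iJ := ∫ z in B ×ˢ B, J z
  set iT := ∫ z in B ×ˢ Bᶜ, T1 z
  have hmain : iP + 2 ^ (-p) * iI ≤ β * iJ + 2 * iT := by linarith
  have h2p : (1 : ℝ) ≤ 2 ^ p := Real.one_le_rpow (by norm_num) hp0.le
  have hinv : (2 : ℝ) ^ p * 2 ^ (-p) = 1 := by
    rw [← Real.rpow_add (by norm_num)]; simp
  have e1 : (2 : ℝ) ^ (2 * p + 1) = 2 * (2 ^ p * 2 ^ p) := by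
    rw [Real.rpow_add_one (by norm_num), two_mul, Real.rpow_add (by norm_num)]; ring
  have e2 : (2 : ℝ) ^ (p + 2) = 4 * 2 ^ p := by
    rw [Real.rpow_add (by norm_num)]; norm_num; ring
  have hm := mul_le_mul_of_nonneg_left hmain (show (0 : ℝ) ≤ 2 ^ p by positivity)
  have e3 : (2 : ℝ) ^ p * (iP + 2 ^ (-p) * iI) = 2 ^ p * iP + iI := by
    rw [mul_add, ← mul_assoc, hinv, one_mul]
  rw [e3] at hm
  have f1 : iP ≤ 2 ^ p * iP := le_mul_of_one_le_left hpot0 h2p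
  have f2 : (2 : ℝ) ^ p * (β * iJ) ≤ 2 ^ p * (2 ^ p * (β * iJ)) := by
    apply mul_le_mul_of_nonneg_left _ (by positivity)
    exact le_mul_of_one_le_left (by positivity) h2p
  have f3 : (2 : ℝ) ^ p * (2 * iT) ≤ 4 * 2 ^ p * iT := by
    have : 0 ≤ (2 : ℝ) ^ p * iT := by positivity
    linarith
  have f4 := mul_le_mul_of_nonneg_left hTle (show (0 : ℝ) ≤ 4 * 2 ^ p by positivity)
  rw [e1, e2]
  have e5 : 2 * ((2 : ℝ) ^ p * 2 ^ p) * (1 / 4 + 1 / 2 * (2 * (p - 1)) ^ (p - 1)) * iJ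
      = 2 ^ p * (2 ^ p * (β * iJ)) := by
    rw [hβ]; ring
  rw [e5]
  linarith
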